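/- arXiv:0909.4787 — 9 statements merged into one kernel-verified Lean document; each statement's English description precedes it below -/
import Mathlib

section
/- Let P₁, P₂, P₃ be n×n complex matrices that are orthogonal projections (Pᵢ² = Pᵢ and Pᵢ is Hermitian) and pairwise orthogonal (PᵢPⱼ = 0 for i ≠ j). For each nonempty J ⊆ {1,2,3} set P_J := Σ_{i∈J} Pᵢ. Then for every positive semidefinite n×n matrix ρ and every Hermitian matrix D with 0 ≤ D ≤ I (i.e. D and I − D are positive semidefinite), the third-order interference expression vanishes: Tr[D·P_{123} ρ P_{123}] − (Tr[D·P_{12} ρ P_{12}] + Tr[D·P_{13} ρ P_{13}] + Tr[D·P_{23} ρ P_{23}]) + (Tr[D·P₁ ρ P₁] + Tr[D·P₂ ρ P₂] + Tr[D·P₃ ρ P₃]) = 0. -/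
open scoped ComplexOrder

/-- Quantum theory exhibits no third-order interference: for three pairwise
orthogonal Hermitian projections `P i` on `ℂ^n`, with multi-slit filters
`P_J := ∑ i in J, P i`, every positive semidefinite preparation `ρ` and every
effect `D` (Hermitian with `0 ≤ D ≤ I`) satisfy Sorkin's identity `I₃ = 0`. -/
theorem three_slit_quantum_I3_zero {n : ℕ}
    (P : Fin 3 → Matrix (Fin n) (Fin n) ℂ)
    (hproj : ∀ i, P i * P i = P i)
    (hherm : ∀ i, (P i).IsHermitian)
    (horth : ∀ i j, i ≠ j → P i * P j = 0)
    (PJ : Finset (Fin 3) → Matrix (Fin n) (Fin n) ℂ)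
    (hPJ : ∀ J : Finset (Fin 3), J.Nonempty → PJ J = ∑ i ∈ J, P i)
    (ρ : Matrix (Fin n) (Fin n) ℂ) (hρ : ρ.PosSemidef)
    (D : Matrix (Fin n) (Fin n) ℂ) (hD : D.IsHermitian)
    (hD0 : D.PosSemidef) (hD1 : (1 - D).PosSemidef) :
    (D * (PJ {0, 1, 2} * ρ * PJ {0, 1, 2})).trace
      - ((D * (PJ {0, 1} * ρ * PJ {0, 1})).trace
          + (D * (PJ {0, 2} * ρ * PJ {0, 2})).trace
          + (D * (PJ {1, 2} * ρ * PJ {1, 2})).trace)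
      + ((D * (PJ {0} * ρ * PJ {0})).trace
          + (D * (PJ {1} * ρ * PJ {1})).trace
          + (D * (PJ {2} * ρ * PJ {2})).trace) = 0 := by
  have h012 : PJ {0, 1, 2} = P 0 + P 1 + P 2 := by
    rw [hPJ _ (by simp), Finset.sum_insert (by decide), Finset.sum_pair (by decide), add_assoc]
  have h01 : PJ {0, 1} = P 0 + P 1 := by
    rw [hPJ _ (by simp), Finset.sum_pair (by decide)]
  have h02 : PJ {0, 2} = P 0 + P 2 := by
    rw [hPJ _ (by simp), Finset.sum_pair (by decide)]
  have h12 : PJ {1, 2} = P 1 + P 2 := by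
    rw [hPJ _ (by simp), Finset.sum_pair (by decide)]
  have hs : ∀ i, PJ {i} = P i := fun i => by
    rw [hPJ _ (by simp), Finset.sum_singleton]
  rw [h012, h01, h02, h12, hs, hs, hs]
  simp only [add_mul, mul_add, Matrix.trace_add]
  ring
end

section
/- P^(3) is idempotent: P^(3) ∘ P^(3) = P^(3). -/
/-- `P⁽³⁾ := P₁₂ + P₁₃ + P₂₃ − P₁ − P₂ − P₃` is idempotent. -/
theorem P3_idempotent {V : Type*} [AddCommGroup V] [Module ℝ V]
    (P : Finset (Fin 3) → V →ₗ[ℝ] V)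
    (hP0 : P ∅ = 0)
    (hmul : ∀ J K : Finset (Fin 3), P J ∘ₗ P K = P (J ∩ K)) :
    (P {0, 1} + P {0, 2} + P {1, 2} - P {0} - P {1} - P {2}) ∘ₗ
      (P {0, 1} + P {0, 2} + P {1, 2} - P {0} - P {1} - P {2}) =
    P {0, 1} + P {0, 2} + P {1, 2} - P {0} - P {1} - P {2} := by
  have e00 : ({0,1} ∩ {0,1} : Finset (Fin 3)) = {0,1} := by decide
  have e01 : ({0,1} ∩ {0,2} : Finset (Fin 3)) = {0} := by decide
  have e02 : ({0,1} ∩ {1,2} : Finset (Fin 3)) = {1} := by decide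
  have e03 : ({0,1} ∩ {0} : Finset (Fin 3)) = {0} := by decide
  have e04 : ({0,1} ∩ {1} : Finset (Fin 3)) = {1} := by decide
  have e05 : ({0,1} ∩ {2} : Finset (Fin 3)) = ∅ := by decide
  have e10 : ({0,2} ∩ {0,1} : Finset (Fin 3)) = {0} := by decide
  have e11 : ({0,2} ∩ {0,2} : Finset (Fin 3)) = {0,2} := by decide
  have e12 : ({0,2} ∩ {1,2} : Finset (Fin 3)) = {2} := by decide
  have e13 : ({0,2} ∩ {0} : Finset (Fin 3)) = {0} := by decide
  have e14 : ({0,2} ∩ {1} : Finset (Fin 3)) = ∅ := by decide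
  have e15 : ({0,2} ∩ {2} : Finset (Fin 3)) = {2} := by decide
  have e20 : ({1,2} ∩ {0,1} : Finset (Fin 3)) = {1} := by decide
  have e21 : ({1,2} ∩ {0,2} : Finset (Fin 3)) = {2} := by decide
  have e22 : ({1,2} ∩ {1,2} : Finset (Fin 3)) = {1,2} := by decide
  have e23 : ({1,2} ∩ {0} : Finset (Fin 3)) = ∅ := by decide
  have e24 : ({1,2} ∩ {1} : Finset (Fin 3)) = {1} := by decide
  have e25 : ({1,2} ∩ {2} : Finset (Fin 3)) = {2} := by decide
  have e30 : ({0} ∩ {0,1} : Finset (Fin 3)) = {0} := by decide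
  have e31 : ({0} ∩ {0,2} : Finset (Fin 3)) = {0} := by decide
  have e32 : ({0} ∩ {1,2} : Finset (Fin 3)) = ∅ := by decide
  have e33 : ({0} ∩ {0} : Finset (Fin 3)) = {0} := by decide
  have e34 : ({0} ∩ {1} : Finset (Fin 3)) = ∅ := by decide
  have e35 : ({0} ∩ {2} : Finset (Fin 3)) = ∅ := by decide
  have e40 : ({1} ∩ {0,1} : Finset (Fin 3)) = {1} := by decide
  have e41 : ({1} ∩ {0,2} : Finset (Fin 3)) = ∅ := by decide
  have e42 : ({1} ∩ {1,2} : Finset (Fin 3)) = {1} := by decide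
  have e43 : ({1} ∩ {0} : Finset (Fin 3)) = ∅ := by decide
  have e44 : ({1} ∩ {1} : Finset (Fin 3)) = {1} := by decide
  have e45 : ({1} ∩ {2} : Finset (Fin 3)) = ∅ := by decide
  have e50 : ({2} ∩ {0,1} : Finset (Fin 3)) = ∅ := by decide
  have e51 : ({2} ∩ {0,2} : Finset (Fin 3)) = {2} := by decide
  have e52 : ({2} ∩ {1,2} : Finset (Fin 3)) = {2} := by decide
  have e53 : ({2} ∩ {0} : Finset (Fin 3)) = ∅ := by decide
  have e54 : ({2} ∩ {1} : Finset (Fin 3)) = ∅ := by decide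
  have e55 : ({2} ∩ {2} : Finset (Fin 3)) = {2} := by decide
  simp only [LinearMap.comp_add, LinearMap.add_comp, LinearMap.comp_sub, LinearMap.sub_comp, hmul]
  simp only [e00, e01, e02, e03, e04, e05, e10, e11, e12, e13, e14, e15, e20, e21, e22, e23, e24, e25, e30, e31, e32, e33, e34, e35, e40, e41, e42, e43, e44, e45, e50, e51, e52, e53, e54, e55, hP0]
  abel
end

section
/- The range of P^(3) equals the linear span of the union of the ranges of the three two-slit filters; as submodules of V: range(P^(3)) = range(P_{12}) ⊔ range(P_{13}) ⊔ range(P_{23}) (the supremum, i.e. the span of the union, of the three ranges). -/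
/-- The range of `P⁽³⁾` equals the span of the union of the ranges of the
three two-slit filters. -/
theorem range_P3_eq_sup_ranges {V : Type*} [AddCommGroup V] [Module ℝ V]
    (P : Finset (Fin 3) → V →ₗ[ℝ] V)
    (hP0 : P ∅ = 0)
    (hmul : ∀ J K : Finset (Fin 3), P J ∘ₗ P K = P (J ∩ K)) :
    LinearMap.range (P {0, 1} + P {0, 2} + P {1, 2} - P {0} - P {1} - P {2}) =
      LinearMap.range (P {0, 1}) ⊔ LinearMap.range (P {0, 2}) ⊔
        LinearMap.range (P {1, 2}) := by
  have h : ∀ (J K L : Finset (Fin 3)), J ∩ K = L → ∀ x, P J (P K x) = P L x := by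
    intro J K L e x
    rw [← e, ← hmul]; rfl
  apply le_antisymm
  · rintro _ ⟨x, rfl⟩
    refine Submodule.mem_sup.2 ⟨P {0, 1} (x - P {0} x - P {1} x) + P {0, 2} (x - P {2} x),
      Submodule.add_mem_sup ⟨_, rfl⟩ ⟨_, rfl⟩, P {1, 2} x, ⟨_, rfl⟩, ?_⟩
    simp only [map_sub, LinearMap.add_apply, LinearMap.sub_apply,
      h {0, 1} {0} {0} (by decide), h {0, 1} {1} {1} (by decide), h {0, 2} {2} {2} (by decide)]
    abel
  · refine sup_le (sup_le ?_ ?_) ?_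
    · rintro _ ⟨x, rfl⟩
      refine ⟨P {0, 1} x, ?_⟩
      simp only [LinearMap.add_apply, LinearMap.sub_apply,
        h {0, 1} {0, 1} {0, 1} (by decide), h {0, 2} {0, 1} {0} (by decide),
        h {1, 2} {0, 1} {1} (by decide), h {0} {0, 1} {0} (by decide),
        h {1} {0, 1} {1} (by decide), h {2} {0, 1} ∅ (by decide), hP0, LinearMap.zero_apply]
      abel
    · rintro _ ⟨x, rfl⟩
      refine ⟨P {0, 2} x, ?_⟩
      simp only [LinearMap.add_apply, LinearMap.sub_apply,
        h {0, 1} {0, 2} {0} (by decide), h {0, 2} {0, 2} {0, 2} (by decide),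
        h {1, 2} {0, 2} {2} (by decide), h {0} {0, 2} {0} (by decide),
        h {1} {0, 2} ∅ (by decide), h {2} {0, 2} {2} (by decide), hP0, LinearMap.zero_apply]
      abel
    · rintro _ ⟨x, rfl⟩
      refine ⟨P {1, 2} x, ?_⟩
      simp only [LinearMap.add_apply, LinearMap.sub_apply,
        h {0, 1} {1, 2} {1} (by decide), h {0, 2} {1, 2} {2} (by decide),
        h {1, 2} {1, 2} {1, 2} (by decide), h {0} {1, 2} ∅ (by decide),
        h {1} {1, 2} {1} (by decide), h {2} {1, 2} {2} (by decide), hP0, LinearMap.zero_apply]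
      abel
end

section
/- R_{123} ∘ P^(3) = P^(3) ∘ R_{123} = 0. -/
/-- `R₁₂₃ ∘ P⁽³⁾ = P⁽³⁾ ∘ R₁₂₃ = 0`. -/
theorem R123_comp_P3_eq_zero {V : Type*} [AddCommGroup V] [Module ℝ V]
    (P : Finset (Fin 3) → V →ₗ[ℝ] V)
    (hP0 : P ∅ = 0)
    (hmul : ∀ J K : Finset (Fin 3), P J ∘ₗ P K = P (J ∩ K)) :
    (P {0, 1, 2} - (P {0, 1} + P {0, 2} + P {1, 2} - P {0} - P {1} - P {2})) ∘ₗ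
      (P {0, 1} + P {0, 2} + P {1, 2} - P {0} - P {1} - P {2}) = 0 ∧
    (P {0, 1} + P {0, 2} + P {1, 2} - P {0} - P {1} - P {2}) ∘ₗ
      (P {0, 1, 2} - (P {0, 1} + P {0, 2} + P {1, 2} - P {0} - P {1} - P {2})) = 0 := by
  constructor <;>
  · simp only [LinearMap.comp_sub, LinearMap.sub_comp, LinearMap.comp_add, LinearMap.add_comp, hmul,
      Finset.insert_inter_of_mem, Finset.insert_inter_of_notMem, Finset.singleton_inter_of_mem,
      Finset.singleton_inter_of_notMem, Finset.mem_insert, Finset.mem_singleton, Fin.reduceEq,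
      or_true, true_or, or_false, not_false_eq_true, insert_empty_eq, hP0]
    abel
end

section
/- The range of P_{123} is the internal direct sum of the ranges of R_{123} and P^(3): range(P_{123}) = range(R_{123}) ⊔ range(P^(3)) as submodules of V, and range(R_{123}) ⊓ range(P^(3)) = {0}. -/
theorem aux_directSum {V : Type*} [AddCommGroup V] [Module ℝ V] (T Q : V →ₗ[ℝ] V)
    (hT : T * T = T) (hQ : Q * Q = Q) (hTQ : T * Q = Q) (hQT : Q * T = Q) :
    LinearMap.range T = LinearMap.range (T - Q) ⊔ LinearMap.range Q ∧
      LinearMap.range (T - Q) ⊓ LinearMap.range Q = ⊥ := by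
  have hQ' : ∀ x, Q (Q x) = Q x := fun x => LinearMap.congr_fun hQ x
  have hT' : ∀ x, T (T x) = T x := fun x => LinearMap.congr_fun hT x
  have hTQ' : ∀ x, T (Q x) = Q x := fun x => LinearMap.congr_fun hTQ x
  have hQT' : ∀ x, Q (T x) = Q x := fun x => LinearMap.congr_fun hQT x
  refine ⟨le_antisymm ?_ (sup_le ?_ ?_), ?_⟩
  · rintro _ ⟨x, rfl⟩
    exact Submodule.mem_sup.2 ⟨_, ⟨x, rfl⟩, _, ⟨x, rfl⟩, by simp⟩
  · rintro _ ⟨x, rfl⟩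
    exact ⟨(T - Q) x, by simp [hT', hTQ']⟩
  · rintro _ ⟨x, rfl⟩
    exact ⟨Q x, hTQ' x⟩
  · rw [eq_bot_iff]
    rintro _ ⟨⟨x, rfl⟩, ⟨y, hy⟩⟩
    have h : Q (Q y) = 0 := by rw [hy]; simp [hQ', hQT']
    rw [hQ', hy] at h
    simpa using h

/-- The range of `P₁₂₃` is the internal direct sum of the ranges of
`R₁₂₃ := P₁₂₃ − P⁽³⁾` and `P⁽³⁾`. -/
theorem range_P123_directSum {V : Type*} [AddCommGroup V] [Module ℝ V]
    (P : Finset (Fin 3) → V →ₗ[ℝ] V)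
    (hP0 : P ∅ = 0)
    (hmul : ∀ J K : Finset (Fin 3), P J ∘ₗ P K = P (J ∩ K)) :
    LinearMap.range (P {0, 1, 2}) =
      LinearMap.range
          (P {0, 1, 2} - (P {0, 1} + P {0, 2} + P {1, 2} - P {0} - P {1} - P {2})) ⊔
        LinearMap.range (P {0, 1} + P {0, 2} + P {1, 2} - P {0} - P {1} - P {2}) ∧
    LinearMap.range
          (P {0, 1, 2} - (P {0, 1} + P {0, 2} + P {1, 2} - P {0} - P {1} - P {2})) ⊓
        LinearMap.range (P {0, 1} + P {0, 2} + P {1, 2} - P {0} - P {1} - P {2}) = ⊥ := by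
  have e : ∀ J K L : Finset (Fin 3), J ∩ K = L → P J * P K = P L := by
    rintro J K _ rfl
    exact hmul J K
  apply aux_directSum
  · exact e _ _ _ (by decide)
  · simp only [mul_add, add_mul, mul_sub, sub_mul, hP0,
      e {0} {0} {0} (by decide),
      e {0} {1} ∅ (by decide),
      e {0} {2} ∅ (by decide),
      e {0} {0, 1} {0} (by decide),
      e {0} {0, 2} {0} (by decide),
      e {0} {1, 2} ∅ (by decide),
      e {1} {0} ∅ (by decide),
      e {1} {1} {1} (by decide),
      e {1} {2} ∅ (by decide),
      e {1} {0, 1} {1} (by decide),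
      e {1} {0, 2} ∅ (by decide),
      e {1} {1, 2} {1} (by decide),
      e {2} {0} ∅ (by decide),
      e {2} {1} ∅ (by decide),
      e {2} {2} {2} (by decide),
      e {2} {0, 1} ∅ (by decide),
      e {2} {0, 2} {2} (by decide),
      e {2} {1, 2} {2} (by decide),
      e {0, 1} {0} {0} (by decide),
      e {0, 1} {1} {1} (by decide),
      e {0, 1} {2} ∅ (by decide),
      e {0, 1} {0, 1} {0, 1} (by decide),
      e {0, 1} {0, 2} {0} (by decide),
      e {0, 1} {1, 2} {1} (by decide),
      e {0, 2} {0} {0} (by decide),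
      e {0, 2} {1} ∅ (by decide),
      e {0, 2} {2} {2} (by decide),
      e {0, 2} {0, 1} {0} (by decide),
      e {0, 2} {0, 2} {0, 2} (by decide),
      e {0, 2} {1, 2} {2} (by decide),
      e {1, 2} {0} ∅ (by decide),
      e {1, 2} {1} {1} (by decide),
      e {1, 2} {2} {2} (by decide),
      e {1, 2} {0, 1} {1} (by decide),
      e {1, 2} {0, 2} {2} (by decide),
      e {1, 2} {1, 2} {1, 2} (by decide)]
    try abel
  · simp only [mul_add, add_mul, mul_sub, sub_mul, hP0,
      e {0, 1, 2} {0} {0} (by decide),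
      e {0, 1, 2} {1} {1} (by decide),
      e {0, 1, 2} {2} {2} (by decide),
      e {0, 1, 2} {0, 1} {0, 1} (by decide),
      e {0, 1, 2} {0, 2} {0, 2} (by decide),
      e {0, 1, 2} {1, 2} {1, 2} (by decide)]
    try abel
  · simp only [mul_add, add_mul, mul_sub, sub_mul, hP0,
      e {0} {0, 1, 2} {0} (by decide),
      e {1} {0, 1, 2} {1} (by decide),
      e {2} {0, 1, 2} {2} (by decide),
      e {0, 1} {0, 1, 2} {0, 1} (by decide),
      e {0, 2} {0, 1, 2} {0, 2} (by decide),
      e {1, 2} {0, 1, 2} {1, 2} (by decide)]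
    try abel
end

section
/- The kernel of P_{123} equals the intersection of the kernels of R_{123} and P^(3): ker(P_{123}) = ker(R_{123}) ⊓ ker(P^(3)). -/
/-- `ker P₁₂₃ = ker R₁₂₃ ⊓ ker P⁽³⁾`, where `R₁₂₃ := P₁₂₃ − P⁽³⁾`. -/
theorem ker_P123_eq_inf_kers {V : Type*} [AddCommGroup V] [Module ℝ V]
    (P : Finset (Fin 3) → V →ₗ[ℝ] V)
    (hP0 : P ∅ = 0)
    (hmul : ∀ J K : Finset (Fin 3), P J ∘ₗ P K = P (J ∩ K)) :
    LinearMap.ker (P {0, 1, 2}) =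
      LinearMap.ker
          (P {0, 1, 2} - (P {0, 1} + P {0, 2} + P {1, 2} - P {0} - P {1} - P {2})) ⊓
        LinearMap.ker (P {0, 1} + P {0, 2} + P {1, 2} - P {0} - P {1} - P {2}) := by
  have key : ∀ v : V, P {0, 1, 2} v = 0 → ∀ J : Finset (Fin 3), P J v = 0 := by
    intro v hv J
    have hJ : J ∩ {0, 1, 2} = J := by
      revert J
      decide
    have h := LinearMap.congr_fun (hmul J {0, 1, 2}) v
    rw [hJ, LinearMap.comp_apply, hv, map_zero] at h
    exact h.symm
  ext v
  rw [Submodule.mem_inf, LinearMap.mem_ker, LinearMap.mem_ker, LinearMap.mem_ker]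
  constructor
  · intro hv
    have h := key v hv
    constructor <;> simp [h]
  · rintro ⟨h1, h2⟩
    rw [LinearMap.sub_apply, h2, sub_zero] at h1
    exact h1
end

section
/- P_{123} = P^(3) if and only if range(P_{123}) = range(P_{12}) ⊔ range(P_{13}) ⊔ range(P_{23}) (the span of the union of the ranges of the three two-slit filters). -/
/-- `P₁₂₃ = P⁽³⁾` if and only if the range of `P₁₂₃` equals the span of the
union of the ranges of the three two-slit filters. -/
theorem P123_eq_P3_iff_range {V : Type*} [AddCommGroup V] [Module ℝ V]
    (P : Finset (Fin 3) → V →ₗ[ℝ] V)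
    (hP0 : P ∅ = 0)
    (hmul : ∀ J K : Finset (Fin 3), P J ∘ₗ P K = P (J ∩ K)) :
    P {0, 1, 2} = P {0, 1} + P {0, 2} + P {1, 2} - P {0} - P {1} - P {2} ↔
      LinearMap.range (P {0, 1, 2}) =
        LinearMap.range (P {0, 1}) ⊔ LinearMap.range (P {0, 2}) ⊔
          LinearMap.range (P {1, 2}) := by
  have m : ∀ (J K L : Finset (Fin 3)), J ∩ K = L → ∀ x, P J (P K x) = P L x := by
    intro J K L h x
    rw [← h, ← hmul J K]
    rfl
  have z : ∀ x, P ∅ x = 0 := fun x => by rw [hP0]; rfl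
  constructor
  · intro h
    apply le_antisymm
    · rintro _ ⟨x, rfl⟩
      have e : P {0, 1, 2} x =
          P {0, 1} (x - P {0} x - P {1} x) + P {0, 2} (x - P {2} x) + P {1, 2} x := by
        rw [h]
        simp only [LinearMap.add_apply, LinearMap.sub_apply, map_sub,
          m {0, 1} {0} {0} (by decide), m {0, 1} {1} {1} (by decide),
          m {0, 2} {2} {2} (by decide)]
        abel
      rw [e]
      exact Submodule.add_mem_sup (Submodule.add_mem_sup ⟨_, rfl⟩ ⟨_, rfl⟩) ⟨_, rfl⟩
    · refine sup_le (sup_le ?_ ?_) ?_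
      · rintro _ ⟨x, rfl⟩
        exact ⟨_, m {0, 1, 2} {0, 1} {0, 1} (by decide) x⟩
      · rintro _ ⟨x, rfl⟩
        exact ⟨_, m {0, 1, 2} {0, 2} {0, 2} (by decide) x⟩
      · rintro _ ⟨x, rfl⟩
        exact ⟨_, m {0, 1, 2} {1, 2} {1, 2} (by decide) x⟩
  · intro h
    ext x
    have hx : P {0, 1, 2} x ∈ LinearMap.range (P {0, 1, 2}) := ⟨x, rfl⟩
    rw [h] at hx
    obtain ⟨y, hy, _, ⟨c, rfl⟩, hc⟩ := Submodule.mem_sup.1 hx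
    obtain ⟨_, ⟨a, rfl⟩, _, ⟨b, rfl⟩, rfl⟩ := Submodule.mem_sup.1 hy
    have key : ∀ J A B C : Finset (Fin 3), J ∩ {0, 1, 2} = J → J ∩ {0, 1} = A →
        J ∩ {0, 2} = B → J ∩ {1, 2} = C → P J x = P A a + P B b + P C c := by
      intro J A B C h0 hA hB hC
      rw [← m _ _ _ h0 x, ← hc, map_add, map_add, m _ _ _ hA, m _ _ _ hB, m _ _ _ hC]
    simp only [LinearMap.add_apply, LinearMap.sub_apply]
    rw [← hc, key {0, 1} {0, 1} {0} {1} (by decide) (by decide) (by decide) (by decide),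
      key {0, 2} {0} {0, 2} {2} (by decide) (by decide) (by decide) (by decide),
      key {1, 2} {1} {2} {1, 2} (by decide) (by decide) (by decide) (by decide),
      key {0} {0} {0} ∅ (by decide) (by decide) (by decide) (by decide),
      key {1} {1} ∅ {1} (by decide) (by decide) (by decide) (by decide),
      key {2} ∅ {2} {2} (by decide) (by decide) (by decide) (by decide), z, z, z]
    abel
end

section
/- Proposition 1, (ii) ⇔ (iii): Let V be a finite-dimensional real vector space and K ⊆ V a convex cone that spans V. Suppose each P_J maps K into K, and define F_J := {s ∈ K | P_J(s) = s}. Then P_{123} = P^(3) if and only if F_{123} ⊆ span(F_{12} ∪ F_{13} ∪ F_{23}), the linear span of the union of the faces of two-slit filtered states. -/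
/-- Proposition 1, (ii) ⇔ (iii): `P₁₂₃ = P⁽³⁾` if and only if the face of
three-slit-filtered states is contained in the linear span of the union of the
faces of two-slit-filtered states. -/
theorem P123_eq_P3_iff_face_subset_span {V : Type*} [AddCommGroup V] [Module ℝ V]
    [FiniteDimensional ℝ V]
    (K : Set V)
    (hadd : ∀ s ∈ K, ∀ t ∈ K, s + t ∈ K)
    (hsmul : ∀ (a : ℝ), 0 ≤ a → ∀ s ∈ K, a • s ∈ K)
    (hspan : Submodule.span ℝ K = ⊤)
    (P : Finset (Fin 3) → V →ₗ[ℝ] V)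
    (hP0 : P ∅ = 0)
    (hmul : ∀ J L : Finset (Fin 3), P J ∘ₗ P L = P (J ∩ L))
    (hPK : ∀ J : Finset (Fin 3), ∀ s ∈ K, P J s ∈ K)
    (F : Finset (Fin 3) → Set V)
    (hF : ∀ J : Finset (Fin 3), F J = {s ∈ K | P J s = s}) :
    P {0, 1, 2} = P {0, 1} + P {0, 2} + P {1, 2} - P {0} - P {1} - P {2} ↔
      F {0, 1, 2} ⊆
        (Submodule.span ℝ (F {0, 1} ∪ F {0, 2} ∪ F {1, 2}) : Submodule ℝ V) := by
  have hm : ∀ (J L M : Finset (Fin 3)) (s : V), J ∩ L = M → P J (P L s) = P M s := by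
    intro J L M s h
    rw [← h, ← hmul J L]
    rfl
  constructor
  · intro h s hs
    rw [hF] at hs
    obtain ⟨hsK, hs⟩ := hs
    have key : ∀ J L : Finset (Fin 3), J ∩ L = L → P L s ∈ F J := by
      intro J L hJ
      rw [hF]
      exact ⟨hPK _ _ hsK, hm J L L s hJ⟩
    have a : ∀ L : Finset (Fin 3), {0, 1} ∩ L = L →
        P L s ∈ Submodule.span ℝ (F {0, 1} ∪ F {0, 2} ∪ F {1, 2}) := fun L hL =>
      Submodule.subset_span (Or.inl (Or.inl (key _ L hL)))
    have b : ∀ L : Finset (Fin 3), {0, 2} ∩ L = L →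
        P L s ∈ Submodule.span ℝ (F {0, 1} ∪ F {0, 2} ∪ F {1, 2}) := fun L hL =>
      Submodule.subset_span (Or.inl (Or.inr (key _ L hL)))
    have c : ∀ L : Finset (Fin 3), {1, 2} ∩ L = L →
        P L s ∈ Submodule.span ℝ (F {0, 1} ∪ F {0, 2} ∪ F {1, 2}) := fun L hL =>
      Submodule.subset_span (Or.inr (key _ L hL))
    have e : s = P {0, 1} s + P {0, 2} s + P {1, 2} s - P {0} s - P {1} s - P {2} s := by
      conv_lhs => rw [← hs, h]
      simp
    rw [SetLike.mem_coe, e]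
    exact Submodule.sub_mem _ (Submodule.sub_mem _ (Submodule.sub_mem _
      (Submodule.add_mem _ (Submodule.add_mem _ (a _ (by decide)) (b _ (by decide)))
        (c _ (by decide))) (a _ (by decide))) (a _ (by decide))) (b _ (by decide))
  · intro h
    set Q : V →ₗ[ℝ] V :=
      P {0, 1} + P {0, 2} + P {1, 2} - P {0} - P {1} - P {2} with hQ
    have Qa : ∀ s, Q s = P {0, 1} s + P {0, 2} s + P {1, 2} s - P {0} s - P {1} s - P {2} s := by
      intro s
      simp [hQ]
    have hfix : ∀ s ∈ Submodule.span ℝ (F {0, 1} ∪ F {0, 2} ∪ F {1, 2}), Q s = s := by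
      intro s hs
      have hle : Submodule.span ℝ (F {0, 1} ∪ F {0, 2} ∪ F {1, 2}) ≤
          LinearMap.eqLocus Q LinearMap.id := by
        rw [Submodule.span_le]
        rintro x ((hx | hx) | hx)
        · rw [hF] at hx
          have hx := hx.2
          change Q x = x
          rw [← hx, Qa, hm {0, 1} {0, 1} {0, 1} x (by decide), hm {0, 2} {0, 1} {0} x (by decide),
            hm {1, 2} {0, 1} {1} x (by decide), hm {0} {0, 1} {0} x (by decide),
            hm {1} {0, 1} {1} x (by decide), hm {2} {0, 1} ∅ x (by decide), hP0,
            LinearMap.zero_apply]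
          abel
        · rw [hF] at hx
          have hx := hx.2
          change Q x = x
          rw [← hx, Qa, hm {0, 1} {0, 2} {0} x (by decide), hm {0, 2} {0, 2} {0, 2} x (by decide),
            hm {1, 2} {0, 2} {2} x (by decide), hm {0} {0, 2} {0} x (by decide),
            hm {1} {0, 2} ∅ x (by decide), hm {2} {0, 2} {2} x (by decide), hP0,
            LinearMap.zero_apply]
          abel
        · rw [hF] at hx
          have hx := hx.2
          change Q x = x
          rw [← hx, Qa, hm {0, 1} {1, 2} {1} x (by decide), hm {0, 2} {1, 2} {2} x (by decide),
            hm {1, 2} {1, 2} {1, 2} x (by decide), hm {0} {1, 2} ∅ x (by decide),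
            hm {1} {1, 2} {1} x (by decide), hm {2} {1, 2} {2} x (by decide), hP0,
            LinearMap.zero_apply]
          abel
      exact hle hs
    apply LinearMap.ext_on hspan
    intro s hs
    have h1 : P {0, 1, 2} s ∈ F {0, 1, 2} := by
      rw [hF]
      exact ⟨hPK _ _ hs, hm _ _ _ s (by decide)⟩
    have h2 := hfix _ (h h1)
    rw [← h2, Qa, Qa, hm {0, 1} {0, 1, 2} {0, 1} s (by decide),
      hm {0, 2} {0, 1, 2} {0, 2} s (by decide), hm {1, 2} {0, 1, 2} {1, 2} s (by decide),
      hm {0} {0, 1, 2} {0} s (by decide), hm {1} {0, 1, 2} {1} s (by decide),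
      hm {2} {0, 1, 2} {2} s (by decide)]
end

section
/- Proposition 1, (i) ⇔ (iii): Let V be a finite-dimensional real vector space, K ⊆ V a closed convex cone that spans V and contains no nontrivial linear subspace, and u : V → ℝ a linear functional with u(s) > 0 for every nonzero s ∈ K. Suppose each P_J maps K into K, and define F_J := {s ∈ K | P_J(s) = s}. Then the following are equivalent: (i) for every linear functional q with 0 ≤ q(s) ≤ u(s) for all s ∈ K and every s ∈ K, q(P_{123}(s) − P^(3)(s)) = 0 (no third-order interference); (iii) F_{123} ⊆ span(F_{12} ∪ F_{13} ∪ F_{23}). -/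
/-- A functional strictly positive on a closed cone dominates a multiple of the norm there. -/
theorem exists_norm_le_of_pos {V : Type*} [NormedAddCommGroup V]
    [NormedSpace ℝ V] [FiniteDimensional ℝ V] (K : Set V) (hclosed : IsClosed K)
    (hsmul : ∀ (a : ℝ), 0 ≤ a → ∀ s ∈ K, a • s ∈ K)
    (u : V →ₗ[ℝ] ℝ) (hu : ∀ s ∈ K, s ≠ 0 → 0 < u s) :
    ∃ c : ℝ, 0 < c ∧ ∀ s ∈ K, c * ‖s‖ ≤ u s := by
  have : ProperSpace V := FiniteDimensional.proper ℝ V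
  have hc : IsCompact (K ∩ Metric.sphere (0 : V) 1) := (isCompact_sphere 0 1).inter_left hclosed
  have hcont : Continuous u := u.continuous_of_finiteDimensional
  have key : ∃ c : ℝ, 0 < c ∧ ∀ x ∈ K ∩ Metric.sphere (0 : V) 1, c ≤ u x := by
    rcases (K ∩ Metric.sphere (0 : V) 1).eq_empty_or_nonempty with h | h
    · exact ⟨1, one_pos, by simp [h]⟩
    · obtain ⟨x, hx, hmin⟩ := hc.exists_isMinOn h hcont.continuousOn
      refine ⟨u x, hu x hx.1 ?_, fun y hy => hmin hy⟩
      rintro rfl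
      have := hx.2
      simp at this
  obtain ⟨c, hc0, hcle⟩ := key
  refine ⟨c, hc0, fun s hs => ?_⟩
  by_cases h0 : s = 0
  · simp [h0]
  have hn : 0 < ‖s‖ := norm_pos_iff.2 h0
  have h1 := hcle (‖s‖⁻¹ • s) ⟨hsmul _ (by positivity) s hs, by
    simp [norm_smul, hn.ne']⟩
  rw [map_smul, smul_eq_mul, inv_mul_eq_div, le_div_iff₀ hn] at h1
  exact h1

/-- Proposition 1, (i) ⇔ (iii): the third-order interference expression
`I₃[q, {P_J}, s] = q(P₁₂₃(s) − P⁽³⁾(s))` vanishes for all effects `q` and all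
states `s ∈ K` if and only if the face of three-slit-filtered states is
contained in the linear span of the union of the faces of two-slit-filtered
states. -/
theorem I3_zero_iff_face_subset_span {V : Type*} [NormedAddCommGroup V]
    [NormedSpace ℝ V] [FiniteDimensional ℝ V]
    (K : Set V)
    (hclosed : IsClosed K)
    (hadd : ∀ s ∈ K, ∀ t ∈ K, s + t ∈ K)
    (hsmul : ∀ (a : ℝ), 0 ≤ a → ∀ s ∈ K, a • s ∈ K)
    (hspan : Submodule.span ℝ K = ⊤)
    (hpointed : ∀ s ∈ K, -s ∈ K → s = 0)
    (u : V →ₗ[ℝ] ℝ)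
    (hu : ∀ s ∈ K, s ≠ 0 → 0 < u s)
    (P : Finset (Fin 3) → V →ₗ[ℝ] V)
    (hP0 : P ∅ = 0)
    (hmul : ∀ J L : Finset (Fin 3), P J ∘ₗ P L = P (J ∩ L))
    (hPK : ∀ J : Finset (Fin 3), ∀ s ∈ K, P J s ∈ K)
    (F : Finset (Fin 3) → Set V)
    (hF : ∀ J : Finset (Fin 3), F J = {s ∈ K | P J s = s}) :
    (∀ q : V →ₗ[ℝ] ℝ, (∀ s ∈ K, 0 ≤ q s ∧ q s ≤ u s) →
        ∀ s ∈ K,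
          q (P {0, 1, 2} s - (P {0, 1} + P {0, 2} + P {1, 2} - P {0} - P {1} - P {2}) s)
            = 0) ↔
      F {0, 1, 2} ⊆
        (Submodule.span ℝ (F {0, 1} ∪ F {0, 2} ∪ F {1, 2}) : Submodule ℝ V) := by
  have hm : ∀ (J L : Finset (Fin 3)) (x : V), P J (P L x) = P (J ∩ L) x := fun J L x => by
    rw [← hmul J L]; rfl
  have hFm : ∀ J s, s ∈ F J ↔ s ∈ K ∧ P J s = s := fun J s => by rw [hF J]; rfl
  have e : ∀ J L M : Finset (Fin 3), J ∩ L = M → ∀ x : V, P J (P L x) = P M x :=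
    fun J L M h x => by rw [hm, h]
  constructor
  · intro h s hs
    obtain ⟨hsK, hsP⟩ := (hFm _ _).1 hs
    obtain ⟨c, hc, hcu⟩ := exists_norm_le_of_pos K hclosed hsmul u hu
    have hu0 : ∀ s ∈ K, 0 ≤ u s := fun s hs => le_trans (by positivity) (hcu s hs)
    have hD : P {0, 1, 2} s - (P {0, 1} + P {0, 2} + P {1, 2} - P {0} - P {1} - P {2}) s = 0 := by
      have h1 := h u (fun s hs => ⟨hu0 s hs, le_rfl⟩) s hsK
      generalize hd : P {0, 1, 2} s -
        (P {0, 1} + P {0, 2} + P {1, 2} - P {0} - P {1} - P {2}) s = d at h1 ⊢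
      rw [← Module.forall_dual_apply_eq_zero_iff ℝ d]
      intro f
      obtain ⟨C, hC, hb⟩ := (LinearMap.toContinuousLinearMap f).bound
      have hb' : ∀ x, |f x| ≤ C * ‖x‖ := hb
      have h2 := h ((1 / 2 : ℝ) • (u + (c / C) • f)) (fun x hx => by
        have h3 : |(c / C) * f x| ≤ u x := by
          rw [abs_mul, abs_of_pos (div_pos hc hC)]
          calc c / C * |f x| ≤ c / C * (C * ‖x‖) := by gcongr; exact hb' x
            _ = c * ‖x‖ := by field_simp
            _ ≤ u x := hcu x hx
        have := abs_le.1 h3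
        simp only [LinearMap.smul_apply, LinearMap.add_apply, smul_eq_mul]
        constructor <;> linarith) s hsK
      rw [hd] at h2
      simp only [LinearMap.smul_apply, LinearMap.add_apply, smul_eq_mul, h1] at h2
      have h4 : (c / C) * f d = 0 := by linarith
      exact (mul_eq_zero.1 h4).resolve_left (div_pos hc hC).ne'
    rw [hsP, sub_eq_zero] at hD
    rw [hD]
    have m01 : ∀ L : Finset (Fin 3), {0, 1} ∩ L = L →
        P L s ∈ Submodule.span ℝ (F {0, 1} ∪ F {0, 2} ∪ F {1, 2}) := fun L hL =>
      Submodule.subset_span (Or.inl (Or.inl ((hFm _ _).2 ⟨hPK _ _ hsK, e _ _ _ hL s⟩)))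
    have m02 : ∀ L : Finset (Fin 3), {0, 2} ∩ L = L →
        P L s ∈ Submodule.span ℝ (F {0, 1} ∪ F {0, 2} ∪ F {1, 2}) := fun L hL =>
      Submodule.subset_span (Or.inl (Or.inr ((hFm _ _).2 ⟨hPK _ _ hsK, e _ _ _ hL s⟩)))
    have m12 : ∀ L : Finset (Fin 3), {1, 2} ∩ L = L →
        P L s ∈ Submodule.span ℝ (F {0, 1} ∪ F {0, 2} ∪ F {1, 2}) := fun L hL =>
      Submodule.subset_span (Or.inr ((hFm _ _).2 ⟨hPK _ _ hsK, e _ _ _ hL s⟩))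
    simp only [LinearMap.sub_apply, LinearMap.add_apply]
    exact sub_mem (sub_mem (sub_mem (add_mem (add_mem (m01 _ (by decide)) (m02 _ (by decide)))
      (m12 _ (by decide))) (m01 _ (by decide))) (m01 _ (by decide))) (m02 _ (by decide))
  · intro h q _ s hs
    set D : V →ₗ[ℝ] V :=
      P {0, 1, 2} - (P {0, 1} + P {0, 2} + P {1, 2} - P {0} - P {1} - P {2}) with hDdef
    have hz : ∀ x, P ∅ x = 0 := fun x => by rw [hP0]; rfl
    have hle : Submodule.span ℝ (F {0, 1} ∪ F {0, 2} ∪ F {1, 2}) ≤ LinearMap.ker D := by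
      rw [Submodule.span_le]
      rintro x ((hx | hx) | hx) <;> obtain ⟨-, hx⟩ := (hFm _ _).1 hx <;>
        rw [SetLike.mem_coe, LinearMap.mem_ker, ← hx, hDdef] <;>
        simp only [LinearMap.sub_apply, LinearMap.add_apply]
      · rw [e {0, 1, 2} {0, 1} {0, 1} (by decide), e {0, 1} {0, 1} {0, 1} (by decide),
          e {0, 2} {0, 1} {0} (by decide), e {1, 2} {0, 1} {1} (by decide),
          e {0} {0, 1} {0} (by decide), e {1} {0, 1} {1} (by decide),
          e {2} {0, 1} ∅ (by decide), hz]
        abel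
      · rw [e {0, 1, 2} {0, 2} {0, 2} (by decide), e {0, 1} {0, 2} {0} (by decide),
          e {0, 2} {0, 2} {0, 2} (by decide), e {1, 2} {0, 2} {2} (by decide),
          e {0} {0, 2} {0} (by decide), e {1} {0, 2} ∅ (by decide),
          e {2} {0, 2} {2} (by decide), hz]
        abel
      · rw [e {0, 1, 2} {1, 2} {1, 2} (by decide), e {0, 1} {1, 2} {1} (by decide),
          e {0, 2} {1, 2} {2} (by decide), e {1, 2} {1, 2} {1, 2} (by decide),
          e {0} {1, 2} ∅ (by decide), e {1} {1, 2} {1} (by decide),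
          e {2} {1, 2} {2} (by decide), hz]
        abel
    have h1 : D (P {0, 1, 2} s) = 0 := hle (h ((hFm _ _).2 ⟨hPK _ _ hs, e _ _ _ (by decide) s⟩))
    have h2 : D (P {0, 1, 2} s) = D s := by
      rw [hDdef]
      simp only [LinearMap.sub_apply, LinearMap.add_apply]
      rw [e {0, 1, 2} {0, 1, 2} {0, 1, 2} (by decide), e {0, 1} {0, 1, 2} {0, 1} (by decide),
        e {0, 2} {0, 1, 2} {0, 2} (by decide), e {1, 2} {0, 1, 2} {1, 2} (by decide),
        e {0} {0, 1, 2} {0} (by decide), e {1} {0, 1, 2} {1} (by decide),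
        e {2} {0, 1, 2} {2} (by decide)]
    have h3 : D s = 0 := h2.symm.trans h1
    have h4 : P {0, 1, 2} s - (P {0, 1} + P {0, 2} + P {1, 2} - P {0} - P {1} - P {2}) s = 0 := h3
    rw [h4, map_zero]
end
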